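/- For every integer N ≥ 2 and every N-point set P in [0,1)², the L₂-discrepancy of P satisfies ‖D_P | L₂‖ ≥ √(317/(172032·log 2)) · √(log N) (numerically, ‖D_P | L₂‖ ≥ 0.0515599… · √(log N)). -/

import Mathlib

open MeasureTheory

noncomputable section

/-- The half-open unit square `[0,1) × [0,1)` in `ℝ × ℝ`. -/
def unitSq : Set (ℝ × ℝ) := Set.Ico (0:ℝ) 1 ×ˢ Set.Ico (0:ℝ) 1

/-- The discrepancy function of the point configuration `p` :
`D_P(x) = Σ_i χ_{[0,x₁)×[0,x₂)}(p i) − N·x₁·x₂`. -/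
def disc (N : ℕ) (p : Fin N → ℝ × ℝ) (x : ℝ × ℝ) : ℝ :=
  (∑ i : Fin N, if 0 ≤ (p i).1 ∧ (p i).1 < x.1 ∧ 0 ≤ (p i).2 ∧ (p i).2 < x.2
    then (1:ℝ) else 0) - N * x.1 * x.2

/-- The `L₂`-discrepancy `‖D_P | L₂‖ = (∫_{[0,1)²} D_P(x)² dx)^{1/2}`. -/
def L2disc (N : ℕ) (p : Fin N → ℝ × ℝ) : ℝ :=
  Real.sqrt (∫ x in unitSq, disc N p x ^ 2)


def Lf (a a1 a2 b b1 b2 : ℝ) : ℝ := 2*(16*a*b) + (16*a1*b+16*a*b1)/4 + (16*a2*b+2*(16*a1*b1)+16*a*b2)/32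
def Qf (a a1 a2 b b1 b2 : ℝ) : ℝ := (16*a*b)^2 + ((16*a1*b)^2+(16*a*b1)^2)/4 + ((16*a2*b)^2+2*(16*a1*b1)^2+(16*a*b2)^2)/16

lemma caseA (l a a1 a2 b : ℝ) (h1 : 3/4 ≤ l) (h2 : l ≤ 3/2) :
    l^2 * Lf a a1 a2 b (2*b) (4*b) - l * Qf a a1 a2 b (2*b) (4*b) ≤ 21/16*l^2 - 317/672 := by
  have e : l^2 * Lf a a1 a2 b (2*b) (4*b) - l * Qf a a1 a2 b (2*b) (4*b) =
    5/8*l^3 - l*(3*(16*a*b-7/16*l)^2 + 3/4*(16*a1*b-l/4)^2 + 1/16*(16*a2*b-l/4)^2) := by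
    unfold Lf Qf; ring
  have p : 0 ≤ l*(3*(16*a*b-7/16*l)^2 + 3/4*(16*a1*b-l/4)^2 + 1/16*(16*a2*b-l/4)^2) := by positivity
  rw [e]
  nlinarith [mul_nonneg (sub_nonneg.2 h1) (sub_nonneg.2 h2), mul_nonneg (mul_nonneg (sub_nonneg.2 h1) (sub_nonneg.2 h2)) (by linarith : 0 ≤ l)]

lemma caseB (l a a2 b b2 : ℝ) (h1 : 3/4 ≤ l) (h2 : l ≤ 3/2) :
    l^2 * Lf a (2*a) a2 b (2*b) b2 - l * Qf a (2*a) a2 b (2*b) b2 ≤ 21/16*l^2 - 317/672 := by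
  have e : l^2 * Lf a (2*a) a2 b (2*b) b2 - l * Qf a (2*a) a2 b (2*b) b2 =
    (169/320+1/128)*l^3 - l*(5*(16*a*b-13/40*l)^2 + 1/16*(16*a*b2-l/4)^2 + 1/16*(16*a2*b-l/4)^2) := by
    unfold Lf Qf; ring
  have p : 0 ≤ l*(5*(16*a*b-13/40*l)^2 + 1/16*(16*a*b2-l/4)^2 + 1/16*(16*a2*b-l/4)^2) := by positivity
  rw [e]
  nlinarith [mul_nonneg (sub_nonneg.2 h1) (sub_nonneg.2 h2), mul_nonneg (mul_nonneg (sub_nonneg.2 h1) (sub_nonneg.2 h2)) (by linarith : 0 ≤ l)]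

lemma interp (l L Q : ℝ) (h1 : 3/4 ≤ l) (h2 : l ≤ 3/2) (hQ : 0 ≤ Q)
    (e1 : 9/16*L - 3/4*Q ≤ 21/16*(9/16) - 317/672) (e2 : 9/4*L - 3/2*Q ≤ 21/16*(9/4) - 317/672) :
    l^2 * L - l * Q ≤ 21/16*l^2 - 317/672 := by
  by_cases h : L ≤ 21/16
  · nlinarith [mul_nonneg hQ (sub_nonneg.2 h1), mul_nonneg (sub_nonneg.2 h) (by nlinarith : 0 ≤ l^2-9/16)]
  · push Not at h
    nlinarith [mul_nonneg (sub_nonneg.2 h.le) (mul_nonneg (sub_nonneg.2 h1) (sub_nonneg.2 h2)), mul_le_mul_of_nonneg_left e1 (sub_nonneg.2 h2), mul_le_mul_of_nonneg_left e2 (sub_nonneg.2 h1)]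

lemma case21_lo (a b : ℝ) (ha : 2/8 ≤ a) (ha' : a ≤ 3/8) (hb : 1/8 ≤ b) (hb' : b ≤ 2/8) :
    9/16 * Lf a (1-2*a) (4*a-1) b (2*b) (1-4*b) - 3/4 * Qf a (1-2*a) (4*a-1) b (2*b) (1-4*b) ≤ 21/16*(9/16) - 317/672 := by
  unfold Lf Qf
  nlinarith [mul_nonneg (sub_nonneg.2 ha) (sub_nonneg.2 hb), mul_nonneg (sub_nonneg.2 ha') (sub_nonneg.2 hb),
    mul_nonneg (sub_nonneg.2 ha') (sub_nonneg.2 hb'), mul_nonneg (sub_nonneg.2 ha) (sub_nonneg.2 hb'),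
    sq_nonneg (a*b-1/16), sq_nonneg (a-11/30), sq_nonneg (b-17/100), sq_nonneg (a*b-a/6), sq_nonneg (a*b-11/30*b)]

lemma case22_lo (a b : ℝ) (ha : 2/8 ≤ a) (ha' : a ≤ 3/8) (hb : 2/8 ≤ b) (hb' : b ≤ 3/8) :
    9/16 * Lf a (1-2*a) (4*a-1) b (1-2*b) (4*b-1) - 3/4 * Qf a (1-2*a) (4*a-1) b (1-2*b) (4*b-1) ≤ 21/16*(9/16) - 317/672 := by
  unfold Lf Qf
  nlinarith [mul_nonneg (sub_nonneg.2 ha) (sub_nonneg.2 hb), mul_nonneg (sub_nonneg.2 ha') (sub_nonneg.2 hb),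
    mul_nonneg (sub_nonneg.2 ha') (sub_nonneg.2 hb'), mul_nonneg (sub_nonneg.2 ha) (sub_nonneg.2 hb'),
    sq_nonneg (a*b-1/16), sq_nonneg (a-11/30), sq_nonneg (b-17/100), sq_nonneg (a*b-a/6), sq_nonneg (a*b-11/30*b)]

lemma case31_lo (a b : ℝ) (ha : 3/8 ≤ a) (ha' : a ≤ 4/8) (hb : 1/8 ≤ b) (hb' : b ≤ 2/8) :
    9/16 * Lf a (1-2*a) (2-4*a) b (2*b) (1-4*b) - 3/4 * Qf a (1-2*a) (2-4*a) b (2*b) (1-4*b) ≤ 21/16*(9/16) - 317/672 := by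
  unfold Lf Qf
  nlinarith [mul_nonneg (sub_nonneg.2 ha) (sub_nonneg.2 hb), mul_nonneg (sub_nonneg.2 ha') (sub_nonneg.2 hb),
    mul_nonneg (sub_nonneg.2 ha') (sub_nonneg.2 hb'), mul_nonneg (sub_nonneg.2 ha) (sub_nonneg.2 hb'),
    sq_nonneg (a*b-1/16), sq_nonneg (a-11/30), sq_nonneg (b-17/100), sq_nonneg (a*b-a/6), sq_nonneg (a*b-11/30*b)]

lemma case32_lo (a b : ℝ) (ha : 3/8 ≤ a) (ha' : a ≤ 4/8) (hb : 2/8 ≤ b) (hb' : b ≤ 3/8) :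
    9/16 * Lf a (1-2*a) (2-4*a) b (1-2*b) (4*b-1) - 3/4 * Qf a (1-2*a) (2-4*a) b (1-2*b) (4*b-1) ≤ 21/16*(9/16) - 317/672 := by
  unfold Lf Qf
  nlinarith [mul_nonneg (sub_nonneg.2 ha) (sub_nonneg.2 hb), mul_nonneg (sub_nonneg.2 ha') (sub_nonneg.2 hb),
    mul_nonneg (sub_nonneg.2 ha') (sub_nonneg.2 hb'), mul_nonneg (sub_nonneg.2 ha) (sub_nonneg.2 hb'),
    sq_nonneg (a*b-1/16), sq_nonneg (a-11/30), sq_nonneg (b-17/100), sq_nonneg (a*b-a/6), sq_nonneg (a*b-11/30*b)]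

lemma case33_lo (a b : ℝ) (ha : 3/8 ≤ a) (ha' : a ≤ 4/8) (hb : 3/8 ≤ b) (hb' : b ≤ 4/8) :
    9/16 * Lf a (1-2*a) (2-4*a) b (1-2*b) (2-4*b) - 3/4 * Qf a (1-2*a) (2-4*a) b (1-2*b) (2-4*b) ≤ 21/16*(9/16) - 317/672 := by
  unfold Lf Qf
  nlinarith [mul_nonneg (sub_nonneg.2 ha) (sub_nonneg.2 hb), mul_nonneg (sub_nonneg.2 ha') (sub_nonneg.2 hb),
    mul_nonneg (sub_nonneg.2 ha') (sub_nonneg.2 hb'), mul_nonneg (sub_nonneg.2 ha) (sub_nonneg.2 hb'),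
    sq_nonneg (a*b-1/16), sq_nonneg (a-11/30), sq_nonneg (b-17/100), sq_nonneg (a*b-a/6), sq_nonneg (a*b-11/30*b)]

lemma case21_hi (a b : ℝ) (ha : 2/8 ≤ a) (ha' : a ≤ 3/8) (hb : 1/8 ≤ b) (hb' : b ≤ 2/8) :
    9/4 * Lf a (1-2*a) (4*a-1) b (2*b) (1-4*b) - 3/2 * Qf a (1-2*a) (4*a-1) b (2*b) (1-4*b) ≤ 21/16*(9/4) - 317/672 := by
  unfold Lf Qf
  nlinarith [mul_nonneg (sub_nonneg.2 ha) (sub_nonneg.2 hb), mul_nonneg (sub_nonneg.2 ha') (sub_nonneg.2 hb),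
    mul_nonneg (sub_nonneg.2 ha') (sub_nonneg.2 hb'), mul_nonneg (sub_nonneg.2 ha) (sub_nonneg.2 hb'),
    sq_nonneg (a*b-1/16), sq_nonneg (a-11/30), sq_nonneg (b-17/100), sq_nonneg (a*b-a/6), sq_nonneg (a*b-11/30*b)]

lemma case31_hi (a b : ℝ) (ha : 3/8 ≤ a) (ha' : a ≤ 4/8) (hb : 1/8 ≤ b) (hb' : b ≤ 2/8) :
    9/4 * Lf a (1-2*a) (2-4*a) b (2*b) (1-4*b) - 3/2 * Qf a (1-2*a) (2-4*a) b (2*b) (1-4*b) ≤ 21/16*(9/4) - 317/672 := by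
  unfold Lf Qf
  nlinarith [mul_nonneg (sub_nonneg.2 ha) (sub_nonneg.2 hb), mul_nonneg (sub_nonneg.2 ha') (sub_nonneg.2 hb),
    mul_nonneg (sub_nonneg.2 ha') (sub_nonneg.2 hb'), mul_nonneg (sub_nonneg.2 ha) (sub_nonneg.2 hb'),
    sq_nonneg (a*b-1/16), sq_nonneg (a-11/30), sq_nonneg (b-17/100), sq_nonneg (a*b-a/6), sq_nonneg (a*b-11/30*b)]

lemma case22_hi (a b : ℝ) (ha : 2/8 ≤ a) (ha' : a ≤ 3/8) (hb : 2/8 ≤ b) (hb' : b ≤ 3/8) :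
    9/4 * Lf a (1-2*a) (4*a-1) b (1-2*b) (4*b-1) - 3/2 * Qf a (1-2*a) (4*a-1) b (1-2*b) (4*b-1) ≤ 21/16*(9/4) - 317/672 := by
  unfold Lf Qf
  nlinarith [mul_nonneg (sub_nonneg.2 ha) (sub_nonneg.2 hb), mul_nonneg (sub_nonneg.2 ha') (sub_nonneg.2 hb),
    mul_nonneg (sub_nonneg.2 ha') (sub_nonneg.2 hb'), mul_nonneg (sub_nonneg.2 ha) (sub_nonneg.2 hb'),
    sq_nonneg (a*b - 1/9), sq_nonneg ((1-2*a)*b - 1/9), sq_nonneg (a*(1-2*b) - 1/9), sq_nonneg ((4*a-1)*b - 1/9), sq_nonneg ((1-2*a)*(1-2*b) - 1/9), sq_nonneg (a*(4*b-1) - 1/9)]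

lemma case32_hi (a b : ℝ) (ha : 3/8 ≤ a) (ha' : a ≤ 4/8) (hb : 2/8 ≤ b) (hb' : b ≤ 3/8) :
    9/4 * Lf a (1-2*a) (2-4*a) b (1-2*b) (4*b-1) - 3/2 * Qf a (1-2*a) (2-4*a) b (1-2*b) (4*b-1) ≤ 21/16*(9/4) - 317/672 := by
  unfold Lf Qf
  nlinarith [mul_nonneg (sub_nonneg.2 ha) (sub_nonneg.2 hb), mul_nonneg (sub_nonneg.2 ha') (sub_nonneg.2 hb),
    mul_nonneg (sub_nonneg.2 ha') (sub_nonneg.2 hb'), mul_nonneg (sub_nonneg.2 ha) (sub_nonneg.2 hb'),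
    sq_nonneg (a*b - 1/8), sq_nonneg ((1-2*a)*b - 1/16), sq_nonneg (a*(1-2*b) - 3/20), sq_nonneg ((2-4*a)*b - 1/8), sq_nonneg ((1-2*a)*(1-2*b) - 3/40), sq_nonneg (a*(4*b-1) - 1/10)]

lemma case33_hi (a b : ℝ) (ha : 3/8 ≤ a) (ha' : a ≤ 4/8) (hb : 3/8 ≤ b) (hb' : b ≤ 4/8) :
    9/4 * Lf a (1-2*a) (2-4*a) b (1-2*b) (2-4*b) - 3/2 * Qf a (1-2*a) (2-4*a) b (1-2*b) (2-4*b) ≤ 21/16*(9/4) - 317/672 := by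
  unfold Lf Qf
  nlinarith [mul_nonneg (sub_nonneg.2 ha) (sub_nonneg.2 hb), mul_nonneg (sub_nonneg.2 ha') (sub_nonneg.2 hb),
    mul_nonneg (sub_nonneg.2 ha') (sub_nonneg.2 hb'), mul_nonneg (sub_nonneg.2 ha) (sub_nonneg.2 hb'),
    sq_nonneg (a*b - 9/64), sq_nonneg ((1-2*a)*b - 3/32), sq_nonneg (a*(1-2*b) - 3/32), sq_nonneg ((2-4*a)*b - 3/16), sq_nonneg ((1-2*a)*(1-2*b) - 1/16), sq_nonneg (a*(2-4*b) - 3/16)]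

/-- The doubling step for distances to the nearest integer. -/
def Dbl (a a1 : ℝ) : Prop := (a ≤ 1/4 ∧ a1 = 2*a) ∨ (1/4 ≤ a ∧ a1 = 1 - 2*a)

lemma Lf_symm (a a1 a2 b b1 b2 : ℝ) : Lf a a1 a2 b b1 b2 = Lf b b1 b2 a a1 a2 := by
  unfold Lf; ring

lemma Qf_symm (a a1 a2 b b1 b2 : ℝ) : Qf a a1 a2 b b1 b2 = Qf b b1 b2 a a1 a2 := by
  unfold Qf; ring

lemma Qf_nonneg (a a1 a2 b b1 b2 : ℝ) : 0 ≤ Qf a a1 a2 b b1 b2 := by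
  unfold Qf; positivity

lemma Dbl_cases {a a1 a2 : ℝ} (h1 : Dbl a a1) (h2 : Dbl a1 a2) (ha : a ≤ 1/2) :
    (a1 = 2*a ∧ a2 = 4*a) ∨
    (a1 = 2*a ∧ a2 = 1-4*a ∧ 1/8 ≤ a ∧ a ≤ 2/8) ∨
    (a1 = 1-2*a ∧ a2 = 4*a-1 ∧ 2/8 ≤ a ∧ a ≤ 3/8) ∨
    (a1 = 1-2*a ∧ a2 = 2-4*a ∧ 3/8 ≤ a ∧ a ≤ 4/8) := by
  rcases h1 with ⟨h, rfl⟩ | ⟨h, rfl⟩ <;> rcases h2 with ⟨h', rfl⟩ | ⟨h', rfl⟩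
  · left; constructor <;> ring
  · right; left; refine ⟨rfl, by ring, by linarith, by linarith⟩
  · right; right; right; refine ⟨rfl, by ring, by linarith, by linarith⟩
  · right; right; left; refine ⟨rfl, by ring, by linarith, by linarith⟩

lemma key {l a a1 a2 b b1 b2 : ℝ} (h1 : 3/4 ≤ l) (h2 : l ≤ 3/2)
    (ha1 : Dbl a a1) (ha2 : Dbl a1 a2) (ha : a ≤ 1/2)
    (hb1 : Dbl b b1) (hb2 : Dbl b1 b2) (hb : b ≤ 1/2) :
    l^2 * Lf a a1 a2 b b1 b2 - l * Qf a a1 a2 b b1 b2 ≤ 21/16*l^2 - 317/672 := by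
  rcases Dbl_cases ha1 ha2 ha with ⟨rfl, rfl⟩ | ⟨rfl, rfl, x1, x2⟩ | ⟨rfl, rfl, x1, x2⟩ | ⟨rfl, rfl, x1, x2⟩
  · rw [Lf_symm, Qf_symm]; exact caseA l _ _ _ _ h1 h2
  · rcases Dbl_cases hb1 hb2 hb with ⟨rfl, rfl⟩ | ⟨rfl, rfl, y1, y2⟩ | ⟨rfl, rfl, y1, y2⟩ | ⟨rfl, rfl, y1, y2⟩
    · exact caseA l _ _ _ _ h1 h2
    · exact caseB l _ _ _ _ h1 h2
    · rw [Lf_symm, Qf_symm]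
      exact interp l _ _ h1 h2 (Qf_nonneg _ _ _ _ _ _) (case21_lo _ _ y1 y2 x1 x2)
        (case21_hi _ _ y1 y2 x1 x2)
    · rw [Lf_symm, Qf_symm]
      exact interp l _ _ h1 h2 (Qf_nonneg _ _ _ _ _ _) (case31_lo _ _ y1 y2 x1 x2)
        (case31_hi _ _ y1 y2 x1 x2)
  · rcases Dbl_cases hb1 hb2 hb with ⟨rfl, rfl⟩ | ⟨rfl, rfl, y1, y2⟩ | ⟨rfl, rfl, y1, y2⟩ | ⟨rfl, rfl, y1, y2⟩
    · exact caseA l _ _ _ _ h1 h2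
    · exact interp l _ _ h1 h2 (Qf_nonneg _ _ _ _ _ _) (case21_lo _ _ x1 x2 y1 y2)
        (case21_hi _ _ x1 x2 y1 y2)
    · exact interp l _ _ h1 h2 (Qf_nonneg _ _ _ _ _ _) (case22_lo _ _ x1 x2 y1 y2)
        (case22_hi _ _ x1 x2 y1 y2)
    · rw [Lf_symm, Qf_symm]
      exact interp l _ _ h1 h2 (Qf_nonneg _ _ _ _ _ _) (case32_lo _ _ y1 y2 x1 x2)
        (case32_hi _ _ y1 y2 x1 x2)
  · rcases Dbl_cases hb1 hb2 hb with ⟨rfl, rfl⟩ | ⟨rfl, rfl, y1, y2⟩ | ⟨rfl, rfl, y1, y2⟩ | ⟨rfl, rfl, y1, y2⟩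
    · exact caseA l _ _ _ _ h1 h2
    · exact interp l _ _ h1 h2 (Qf_nonneg _ _ _ _ _ _) (case31_lo _ _ x1 x2 y1 y2)
        (case31_hi _ _ x1 x2 y1 y2)
    · exact interp l _ _ h1 h2 (Qf_nonneg _ _ _ _ _ _) (case32_lo _ _ x1 x2 y1 y2)
        (case32_hi _ _ x1 x2 y1 y2)
    · exact interp l _ _ h1 h2 (Qf_nonneg _ _ _ _ _ _) (case33_lo _ _ x1 x2 y1 y2)
        (case33_hi _ _ x1 x2 y1 y2)

/-- Distance to the nearest integer. -/
def tent (y : ℝ) : ℝ := min (Int.fract y) (1 - Int.fract y)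

lemma tent_le (y : ℝ) : tent y ≤ 1/2 := by
  unfold tent
  rcases le_total (Int.fract y) (1/2) with h | h
  · exact (min_le_left _ _).trans h
  · exact (min_le_right _ _).trans (by linarith)

lemma tent_nonneg (y : ℝ) : 0 ≤ tent y :=
  le_min (Int.fract_nonneg y) (by linarith [Int.fract_lt_one y])

lemma tent_Dbl (y : ℝ) : Dbl (tent y) (tent (2*y)) := by
  have h0 := Int.fract_nonneg y
  have h1 := Int.fract_lt_one y
  unfold Dbl tent
  rcases lt_or_ge (Int.fract y) (1/2) with h | h
  · have e : Int.fract (2*y) = 2 * Int.fract y := by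
      rw [Int.fract_eq_iff]
      refine ⟨by linarith, by linarith, 2*⌊y⌋, ?_⟩
      push_cast; rw [Int.fract]; ring
    rw [e]
    rcases le_total (Int.fract y) (1/4) with h' | h'
    · left; rw [min_eq_left (by linarith), min_eq_left (by linarith)]; exact ⟨h', rfl⟩
    · right; rw [min_eq_left (by linarith), min_eq_right (by linarith)]; exact ⟨h', rfl⟩
  · have e : Int.fract (2*y) = 2 * Int.fract y - 1 := by
      rw [Int.fract_eq_iff]
      refine ⟨by linarith, by linarith, 2*⌊y⌋+1, ?_⟩
      push_cast; rw [Int.fract]; ring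
    rw [e]
    rcases le_total (Int.fract y) (3/4) with h' | h'
    · right; rw [min_eq_right (by linarith), min_eq_left (by linarith)]; exact ⟨by linarith, by ring⟩
    · left; rw [min_eq_right (by linarith), min_eq_right (by linarith)]; exact ⟨by linarith, by ring⟩

lemma bessel {α ι : Type*} [MeasurableSpace α] [DecidableEq ι] (μ : Measure α) (f : α → ℝ) (e : ι → α → ℝ)
    (s : Finset ι) (w : ι → ℝ) (hw : ∀ i, 0 < w i)
    (hf : Integrable (fun x => f x ^ 2) μ) (hfe : ∀ i ∈ s, Integrable (fun x => f x * e i x) μ)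
    (hee : ∀ i ∈ s, ∀ j ∈ s, Integrable (fun x => e i x * e j x) μ)
    (orth : ∀ i ∈ s, ∀ j ∈ s, ∫ x, e i x * e j x ∂μ = if i = j then w i else 0) :
    ∑ i ∈ s, (∫ x, f x * e i x ∂μ)^2 / w i ≤ ∫ x, f x ^ 2 ∂μ := by
  set c : ι → ℝ := fun i => (∫ x, f x * e i x ∂μ) / w i with hc
  have h0 : 0 ≤ ∫ x, (f x - ∑ i ∈ s, c i * e i x)^2 ∂μ := integral_nonneg fun x => sq_nonneg _
  have h1 : ∀ x, (f x - ∑ i ∈ s, c i * e i x)^2 =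
      (f x ^2 - ∑ i ∈ s, 2 * c i * (f x * e i x)) + ∑ i ∈ s, ∑ j ∈ s, c i * c j * (e i x * e j x) := by
    intro x
    have a1 : ∑ i ∈ s, 2 * c i * (f x * e i x) = 2 * f x * ∑ i ∈ s, c i * e i x := by
      rw [Finset.mul_sum]; exact Finset.sum_congr rfl fun i _ => by ring
    have a2 : ∑ i ∈ s, ∑ j ∈ s, c i * c j * (e i x * e j x) = (∑ i ∈ s, c i * e i x)^2 := by
      rw [sq, Finset.sum_mul_sum]
      exact Finset.sum_congr rfl fun i _ => Finset.sum_congr rfl fun j _ => by ring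
    rw [a1, a2]; ring
  have i1 : Integrable (fun x => ∑ i ∈ s, 2 * c i * (f x * e i x)) μ :=
    integrable_finsetSum _ fun i hi => (hfe i hi).const_mul _
  have i2 : Integrable (fun x => ∑ i ∈ s, ∑ j ∈ s, c i * c j * (e i x * e j x)) μ :=
    integrable_finsetSum _ fun i hi => integrable_finsetSum _ fun j hj => (hee i hi j hj).const_mul _
  have i0 : Integrable (fun x => f x ^2 - ∑ i ∈ s, 2 * c i * (f x * e i x)) μ := hf.sub i1
  simp_rw [h1] at h0
  rw [integral_add i0 i2, integral_sub hf i1,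
    integral_finsetSum _ (fun i hi => (hfe i hi).const_mul _),
    integral_finsetSum _ (fun i hi => integrable_finsetSum _ fun j hj => (hee i hi j hj).const_mul _)] at h0
  have b1 : ∑ i ∈ s, ∫ x, 2 * c i * (f x * e i x) ∂μ = 2 * ∑ i ∈ s, (∫ x, f x * e i x ∂μ)^2 / w i := by
    rw [Finset.mul_sum]
    refine Finset.sum_congr rfl fun i _ => ?_
    rw [integral_const_mul, hc]; ring
  have b2 : ∑ i ∈ s, ∫ x, ∑ j ∈ s, c i * c j * (e i x * e j x) ∂μ =
      ∑ i ∈ s, (∫ x, f x * e i x ∂μ)^2 / w i := by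
    refine Finset.sum_congr rfl fun i hi => ?_
    rw [integral_finsetSum _ (fun j hj => (hee i hi j hj).const_mul _)]
    rw [Finset.sum_eq_single i]
    · rw [integral_const_mul, orth i hi i hi, if_pos rfl, hc]
      have := (hw i).ne'
      field_simp
    · intro j hj hji
      rw [integral_const_mul, orth i hi j hj, if_neg (Ne.symm hji), mul_zero]
    · exact fun h => absurd hi h
  rw [b1, b2] at h0
  linarith

/-- One-dimensional restricted Lebesgue measure. -/
def mu : Measure ℝ := volume.restrict (Set.Ico 0 1)

instance : IsFiniteMeasure mu := by unfold mu; infer_instance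

/-- A Haar step function. -/
def hr (s d x : ℝ) : ℝ :=
  (Set.Ico (s+d) (s+2*d)).indicator (fun _ => 1) x - (Set.Ico s (s+d)).indicator (fun _ => 1) x

lemma hr_meas (s d : ℝ) : Measurable (hr s d) := by
  unfold hr
  exact (measurable_const.indicator measurableSet_Ico).sub (measurable_const.indicator measurableSet_Ico)

lemma hr_bound (s d x : ℝ) : |hr s d x| ≤ 1 := by
  unfold hr Set.indicator
  split_ifs with h1 h2 <;> norm_num

lemma mu_ind (φ : ℝ → ℝ) (u v : ℝ) (hu : 0 ≤ u) (hv : v ≤ 1) :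
    ∫ x, (Set.Ico u v).indicator φ x ∂mu = ∫ x in Set.Ico u v, φ x := by
  rw [integral_indicator measurableSet_Ico, mu, Measure.restrict_restrict measurableSet_Ico,
    Set.inter_eq_left.2 (Set.Ico_subset_Ico hu hv)]

lemma int_hr (φ : ℝ → ℝ) (s d : ℝ) (hs : 0 ≤ s) (hd : 0 ≤ d) (h1 : s + 2*d ≤ 1) (hφ : Integrable φ mu) :
    ∫ x, φ x * hr s d x ∂mu =
      (∫ x in Set.Ico (s+d) (s+2*d), φ x) - ∫ x in Set.Ico s (s+d), φ x := by
  have e : ∀ x, φ x * hr s d x =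
      (Set.Ico (s+d) (s+2*d)).indicator φ x - (Set.Ico s (s+d)).indicator φ x := by
    intro x; unfold hr Set.indicator
    split_ifs <;> simp
  simp_rw [e]
  rw [integral_sub (hφ.indicator measurableSet_Ico) (hφ.indicator measurableSet_Ico),
    mu_ind _ _ _ (by linarith) h1, mu_ind _ _ _ hs (by linarith)]

lemma int_hr_const (φ : ℝ → ℝ) (s d α β : ℝ) (hs : 0 ≤ s) (hd : 0 ≤ d) (h1 : s + 2*d ≤ 1)
    (hα : ∀ x ∈ Set.Ico s (s+d), φ x = α) (hβ : ∀ x ∈ Set.Ico (s+d) (s+2*d), φ x = β) :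
    ∫ x, φ x * hr s d x ∂mu = (β - α) * d := by
  have e : ∀ x, φ x * hr s d x =
      (Set.Ico (s+d) (s+2*d)).indicator (fun _ => β) x - (Set.Ico s (s+d)).indicator (fun _ => α) x := by
    intro x; unfold hr Set.indicator
    split_ifs with a b b
    · exact absurd a.1 (not_le.2 b.2)
    · rw [hβ x a]; ring
    · rw [hα x b]; ring
    · simp
  simp_rw [e]
  rw [integral_sub ((integrable_const _).indicator measurableSet_Ico)
    ((integrable_const _).indicator measurableSet_Ico),
    mu_ind _ _ _ (by linarith) h1, mu_ind _ _ _ hs (by linarith)]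
  simp only [setIntegral_const, smul_eq_mul, Measure.real, Real.volume_Ico]
  rw [ENNReal.toReal_ofReal (by linarith), ENNReal.toReal_ofReal (by linarith)]
  ring

/-- Indicator of `c < x`. -/
def gs (c x : ℝ) : ℝ := if c < x then 1 else 0

lemma gs_meas (c : ℝ) : Measurable (gs c) :=
  Measurable.ite measurableSet_Ioi measurable_const measurable_const

lemma gs_bound (c x : ℝ) : |gs c x| ≤ 1 := by unfold gs; split_ifs <;> norm_num

lemma gs_int (c : ℝ) : Integrable (gs c) mu :=
  Integrable.of_bound (gs_meas c).aestronglyMeasurable 1 (Filter.Eventually.of_forall fun x => gs_bound c x)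

lemma int_gs (c u v : ℝ) : ∫ x in Set.Ico u v, gs c x = max (v - max u c) 0 := by
  have : ∀ x, gs c x = (Set.Ioi c).indicator (fun _ => (1:ℝ)) x := by
    intro x; simp [gs, Set.indicator]
  simp_rw [this]
  rw [integral_Ico_eq_integral_Ioc, integral_indicator measurableSet_Ioi,
    Measure.restrict_restrict measurableSet_Ioi, Set.inter_comm, Set.Ioc_inter_Ioi,
    setIntegral_const]
  simp [Measure.real, Real.volume_Ioc, ENNReal.toReal_ofReal']

lemma int_id (u v : ℝ) (h : u ≤ v) : ∫ x in Set.Ico u v, x = (v^2-u^2)/2 := by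
  rw [integral_Ico_eq_integral_Ioc, ← intervalIntegral.integral_of_le h, integral_id]

lemma id_int : Integrable (fun x : ℝ => x) mu := by
  unfold mu
  exact (continuous_id.integrableOn_Icc).mono_set Set.Ico_subset_Icc_self

/-- Haar function of level `j` and position `l`. -/
def haar (j l : ℕ) : ℝ → ℝ := hr (l/2^j) (1/2^(j+1))

lemma haar_pos (j l : ℕ) : (0:ℝ) ≤ l/2^j := by positivity

lemma haar_dpos (j : ℕ) : (0:ℝ) ≤ 1/2^(j+1) := by positivity

lemma haar_end (j l : ℕ) : (l:ℝ)/2^j + 2*(1/2^(j+1)) = (l+1)/2^j := by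
  rw [pow_succ]; field_simp

lemma haar_mid (j l : ℕ) : (l:ℝ)/2^j + 1/2^(j+1) = ((2*l+1 : ℕ):ℝ)/2^(j+1) := by
  rw [pow_succ]; push_cast; field_simp

lemma haar_le (j l : ℕ) (h : l < 2^j) : (l:ℝ)/2^j + 2*(1/2^(j+1)) ≤ 1 := by
  rw [haar_end, div_le_one (by positivity)]
  exact_mod_cast h

lemma dy_lt {j q l : ℕ} {x : ℝ} (h1 : (l:ℝ)/2^j ≤ x) (h2 : x < (l+1)/2^j) :
    x < (q:ℝ)/2^j ↔ l < q := by
  constructor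
  · intro h
    have := h1.trans_lt h
    rw [div_lt_div_iff_of_pos_right (by positivity)] at this
    exact_mod_cast this
  · intro h
    refine h2.trans_le ?_
    rw [div_le_div_iff_of_pos_right (by positivity)]
    exact_mod_cast h

lemma dy_scale {j j' : ℕ} (h : j ≤ j') (q : ℕ) : (q:ℝ)/2^j = ((q*2^(j'-j) : ℕ):ℝ)/2^j' := by
  obtain ⟨k, rfl⟩ := Nat.exists_eq_add_of_le h
  rw [Nat.add_sub_cancel_left, pow_add]
  push_cast
  field_simp

lemma haar_formula (j l : ℕ) (x : ℝ) : haar j l x =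
    if x < (l:ℝ)/2^j then 0 else if x < ((2*l+1 : ℕ):ℝ)/2^(j+1) then -1 else
      if x < ((l+1 : ℕ):ℝ)/2^j then 1 else 0 := by
  have e1 : (l:ℝ)/2^j ≤ ((2*l+1 : ℕ):ℝ)/2^(j+1) := by
    rw [← haar_mid]; linarith [haar_dpos j]
  have e2 : ((2*l+1 : ℕ):ℝ)/2^(j+1) ≤ ((l+1 : ℕ):ℝ)/2^j := by
    rw [← haar_mid]; push_cast; rw [← haar_end]; linarith [haar_dpos j]
  unfold haar hr Set.indicator
  rw [haar_mid, haar_end]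
  push_cast at *
  simp only [Set.mem_Ico]
  split_ifs <;> grind

lemma haar_const {j l j' l' : ℕ} (h : j < j') {x : ℝ} (h1 : (l':ℝ)/2^j' ≤ x) (h2 : x < (l'+1)/2^j') :
    haar j l x = haar j l ((l':ℝ)/2^j') := by
  have h3 : (l':ℝ)/2^j' < (l'+1)/2^j' := h1.trans_lt h2
  rw [haar_formula, haar_formula, dy_scale h.le l, dy_scale (Nat.succ_le_of_lt h) (2*l+1),
    dy_scale h.le (l+1)]
  simp only [dy_lt h1 h2, dy_lt (le_refl _) h3]

lemma haar_orth_lt {j l j' l' : ℕ} (h : j < j') (hl' : l' < 2^j') :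
    ∫ x, haar j l x * haar j' l' x ∂mu = 0 := by
  have := int_hr_const (haar j l) (l'/2^j') (1/2^(j'+1)) (haar j l ((l':ℝ)/2^j')) (haar j l ((l':ℝ)/2^j'))
    (haar_pos _ _) (haar_dpos _) (haar_le _ _ hl') ?_ ?_
  · exact this.trans (by ring)
  · intro x hx
    refine haar_const h hx.1 (hx.2.trans_le ?_)
    rw [← haar_end]; linarith [haar_dpos j']
  · intro x hx
    refine haar_const h (le_trans ?_ hx.1) (hx.2.trans_le ?_)
    · linarith [haar_dpos j']
    · rw [← haar_end]

lemma haar_orth_eq {j l l' : ℕ} (hl' : l' < 2^j) :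
    ∫ x, haar j l x * haar j l' x ∂mu = if l = l' then 1/2^j else 0 := by
  split_ifs with h
  · subst h
    have := int_hr_const (haar j l) (l/2^j) (1/2^(j+1)) (-1) 1
      (haar_pos _ _) (haar_dpos _) (haar_le _ _ hl') ?_ ?_
    · refine this.trans ?_
      rw [pow_succ]; field_simp; norm_num
    · intro x hx
      have hh := hx.2
      rw [haar_mid] at hh
      rw [haar_formula, if_neg (not_lt.2 hx.1), if_pos hh]
    · intro x hx
      have h1 := hx.1
      have h2 := hx.2
      rw [haar_formula, if_neg, if_neg, if_pos]
      · rw [haar_end] at h2; exact_mod_cast h2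
      · rw [haar_mid] at h1; exact not_lt.2 h1
      · rw [not_lt]; linarith [haar_dpos j]
  · have key : ∀ x : ℝ, (l':ℝ)/2^j ≤ x → x < (l'+1)/2^j → haar j l x = 0 := by
      intro x h1 h2
      have a1 := dy_lt (q := l) h1 h2
      have a2 := dy_lt (q := l+1) h1 h2
      have e2 : ((2*l+1 : ℕ):ℝ)/2^(j+1) ≤ ((l+1 : ℕ):ℝ)/2^j := by
        rw [← haar_mid]; push_cast; rw [← haar_end]; linarith [haar_dpos j]
      rw [haar_formula]
      by_cases b : x < (l:ℝ)/2^j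
      · rw [if_pos b]
      · have b' : ¬ l' < l := fun hh => b (a1.2 hh)
        have b2 : ¬ l' < l+1 := by omega
        have b3 : ¬ x < ((l+1 : ℕ):ℝ)/2^j := fun hh => b2 (a2.1 hh)
        rw [if_neg b, if_neg (fun hh => b3 (hh.trans_le e2)), if_neg b3]
    have := int_hr_const (haar j l) (l'/2^j) (1/2^(j+1)) 0 0
      (haar_pos _ _) (haar_dpos _) (haar_le _ _ hl') ?_ ?_
    · exact this.trans (by ring)
    · intro x hx
      refine key x hx.1 (hx.2.trans_le ?_)
      rw [← haar_end]; linarith [haar_dpos j]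
    · intro x hx
      refine key x (le_trans ?_ hx.1) (hx.2.trans_le ?_)
      · linarith [haar_dpos j]
      · rw [← haar_end]

lemma haar_orth {j l j' l' : ℕ} (hl : l < 2^j) (hl' : l' < 2^j') :
    ∫ x, haar j l x * haar j' l' x ∂mu = if j = j' ∧ l = l' then 1/2^j else 0 := by
  rcases lt_trichotomy j j' with h | h | h
  · rw [haar_orth_lt h hl', if_neg (by omega)]
  · subst h; rw [haar_orth_eq hl']; simp
  · simp_rw [mul_comm (haar j l _)]
    rw [haar_orth_lt h hl, if_neg (by omega)]

/-- The coefficient of a step function. -/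
def TT (j l : ℕ) (c : ℝ) : ℝ := if l = ⌊2^j * c⌋₊ then tent (2^j * c) / 2^j else 0

lemma haar_gs {j l : ℕ} (hl : l < 2^j) {c : ℝ} (hc : 0 ≤ c) :
    ∫ x, gs c x * haar j l x ∂mu = TT j l c := by
  rw [haar, int_hr _ _ _ (haar_pos _ _) (haar_dpos _) (haar_le _ _ hl) (gs_int c), int_gs, int_gs]
  have hd : (0:ℝ) < 1/2^(j+1) := by positivity
  have hj : (0:ℝ) < 2^j := by positivity
  have he := haar_end j l
  have hdd : (2:ℝ) * (1/2^(j+1)) = 1/2^j := by rw [pow_succ]; field_simp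
  set d : ℝ := 1/2^(j+1) with hddef
  set s : ℝ := (l:ℝ)/2^j with hs
  unfold TT
  have hfl : (l = ⌊2^j * c⌋₊) ↔ (s ≤ c ∧ c < s + 2*d) := by
    rw [eq_comm, Nat.floor_eq_iff (by positivity), he, hs, div_le_iff₀ hj, lt_div_iff₀ hj, mul_comm]
  split_ifs with h
  · have h' := hfl.1 h
    have hfr : Int.fract (2^j * c) = 2^j*(c - s) := by
      rw [Int.fract_eq_iff]
      refine ⟨mul_nonneg hj.le (by linarith), ?_, l, ?_⟩
      · rw [mul_comm, ← lt_div_iff₀ hj, ← hdd]; linarith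
      · rw [hs]; push_cast; field_simp; ring
    have ht : tent (2^j * c) / 2^j = min (c - s) (s + 2*d - c) := by
      unfold tent
      rw [hfr, ← min_div_div_right hj.le]
      congr 1
      · field_simp
      · rw [he, hs]; field_simp; ring
    rw [ht]
    rcases le_total c (s+d) with hm | hm
    · rw [max_eq_left hm, max_eq_right h'.1, max_eq_left (by linarith), max_eq_left (by linarith),
        min_eq_left (by linarith)]
      ring
    · rw [max_eq_right hm, max_eq_right h'.1, max_eq_left (by linarith), max_eq_right (by linarith),
        min_eq_right (by linarith)]
      ring
  · have h' : c < s ∨ s + 2*d ≤ c := by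
      by_contra hh
      push Not at hh
      exact h (hfl.2 hh)
    rcases h' with h' | h'
    · rw [max_eq_left (by linarith : c ≤ s+d), max_eq_left h'.le, max_eq_left (by linarith), max_eq_left (by linarith)]
      ring
    · rw [max_eq_right (by linarith : s+d ≤ c), max_eq_right (by linarith : s ≤ c), max_eq_right (by linarith), max_eq_right (by linarith)]
      ring

lemma haar_id {j l : ℕ} (hl : l < 2^j) : ∫ x, x * haar j l x ∂mu = 1/4^(j+1) := by
  have hd := haar_dpos j
  rw [haar, int_hr _ _ _ (haar_pos _ _) hd (haar_le _ _ hl) id_int,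
    int_id _ _ (by linarith), int_id _ _ (by linarith)]
  have : (4:ℝ)^(j+1) = (2^(j+1))^2 := by rw [← pow_mul, mul_comm, pow_mul]; norm_num
  rw [this]
  ring

lemma TT_nonneg (j l : ℕ) (c : ℝ) : 0 ≤ TT j l c := by
  unfold TT; split_ifs
  · exact div_nonneg (tent_nonneg _) (by positivity)
  · exact le_rfl

lemma TT_floor (j : ℕ) {c : ℝ} (h0 : 0 ≤ c) (h1 : c < 1) : ⌊2^j * c⌋₊ ∈ Finset.range (2^j) := by
  rw [Finset.mem_range, Nat.floor_lt (by positivity)]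
  push_cast
  have : (0:ℝ) < 2^j := by positivity
  nlinarith

lemma TT_sum (j : ℕ) {c : ℝ} (h0 : 0 ≤ c) (h1 : c < 1) :
    ∑ l ∈ Finset.range (2^j), TT j l c = tent (2^j*c) / 2^j := by
  unfold TT
  rw [Finset.sum_ite_eq', if_pos (TT_floor j h0 h1)]

lemma TT_sum_sq (j : ℕ) {c : ℝ} (h0 : 0 ≤ c) (h1 : c < 1) :
    ∑ l ∈ Finset.range (2^j), TT j l c ^ 2 = (tent (2^j*c) / 2^j)^2 := by
  unfold TT
  simp_rw [ite_pow]
  simp only [ne_eq, OfNat.ofNat_ne_zero, not_false_eq_true, zero_pow]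
  rw [Finset.sum_ite_eq', if_pos (TT_floor j h0 h1)]

lemma haar_meas (j l : ℕ) : Measurable (haar j l) := hr_meas _ _

lemma haar_bound (j l : ℕ) (x : ℝ) : |haar j l x| ≤ 1 := hr_bound _ _ _

lemma haar_mul_int (j l j' l' : ℕ) : Integrable (fun x => haar j l x * haar j' l' x) mu := by
  refine Integrable.of_bound ((haar_meas j l).mul (haar_meas j' l')).aestronglyMeasurable 1
    (Filter.Eventually.of_forall fun x => ?_)
  rw [Real.norm_eq_abs, abs_mul]
  exact mul_le_one₀ (haar_bound _ _ _) (abs_nonneg _) (haar_bound _ _ _)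

lemma gs_haar_int (c : ℝ) (j l : ℕ) : Integrable (fun x => gs c x * haar j l x) mu := by
  refine Integrable.of_bound ((gs_meas c).mul (haar_meas j l)).aestronglyMeasurable 1
    (Filter.Eventually.of_forall fun x => ?_)
  rw [Real.norm_eq_abs, abs_mul]
  exact mul_le_one₀ (gs_bound _ _) (abs_nonneg _) (haar_bound _ _ _)

lemma id_haar_int (j l : ℕ) : Integrable (fun x => x * haar j l x) mu := by
  refine id_int.mul_bdd (c := 1) (haar_meas j l).aestronglyMeasurable
    (Filter.Eventually.of_forall fun x => ?_)
  exact haar_bound _ _ _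

/-- Index set of Haar rectangles. -/
abbrev HIdx := Σ _ : ℕ × ℕ, ℕ × ℕ

/-- Two-dimensional Haar function. -/
def ee (q : HIdx) (x : ℝ × ℝ) : ℝ := haar q.1.1 q.2.1 x.1 * haar q.1.2 q.2.2 x.2

/-- Rectangles of a set of levels. -/
def boxes (lv : Finset (ℕ × ℕ)) : Finset HIdx :=
  lv.sigma fun j => Finset.range (2^j.1) ×ˢ Finset.range (2^j.2)

/-- Simplified discrepancy function. -/
def dd (N : ℕ) (p : Fin N → ℝ × ℝ) (x : ℝ × ℝ) : ℝ :=
  (∑ i : Fin N, gs (p i).1 x.1 * gs (p i).2 x.2) - N * (x.1 * x.2)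

lemma disc_eq (N : ℕ) (p : Fin N → ℝ × ℝ) (hp : ∀ i, p i ∈ unitSq) : disc N p = dd N p := by
  funext x
  unfold disc dd
  congr 1
  · refine Finset.sum_congr rfl fun i _ => ?_
    have h1 : 0 ≤ (p i).1 := (hp i).1.1
    have h2 : 0 ≤ (p i).2 := (hp i).2.1
    simp only [gs, h1, h2, true_and]
    split_ifs <;> simp_all
  · ring

lemma vol_unitSq : (volume : Measure (ℝ × ℝ)).restrict unitSq = mu.prod mu := by
  rw [unitSq, mu, Measure.prod_restrict, Measure.volume_eq_prod]

lemma ee_mul (q q' : HIdx) (x : ℝ × ℝ) : ee q x * ee q' x =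
    (haar q.1.1 q.2.1 x.1 * haar q'.1.1 q'.2.1 x.1) * (haar q.1.2 q.2.2 x.2 * haar q'.1.2 q'.2.2 x.2) := by
  unfold ee; ring

lemma dd_mul (N : ℕ) (p : Fin N → ℝ × ℝ) (q : HIdx) (x : ℝ × ℝ) : dd N p x * ee q x =
    (∑ i : Fin N, (gs (p i).1 x.1 * haar q.1.1 q.2.1 x.1) * (gs (p i).2 x.2 * haar q.1.2 q.2.2 x.2))
      - N * ((x.1 * haar q.1.1 q.2.1 x.1) * (x.2 * haar q.1.2 q.2.2 x.2)) := by
  unfold ee dd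
  rw [sub_mul, Finset.sum_mul]
  congr 1
  · exact Finset.sum_congr rfl fun i _ => by ring
  · ring

lemma dd_sum_int (N : ℕ) (p : Fin N → ℝ × ℝ) (q : HIdx) : Integrable (fun x : ℝ × ℝ =>
    ∑ i : Fin N, (gs (p i).1 x.1 * haar q.1.1 q.2.1 x.1) * (gs (p i).2 x.2 * haar q.1.2 q.2.2 x.2))
    (mu.prod mu) :=
  integrable_finsetSum _ fun i _ => (gs_haar_int _ _ _).mul_prod (gs_haar_int _ _ _)

lemma dd_id_int (N : ℕ) (q : HIdx) : Integrable (fun x : ℝ × ℝ =>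
    (N:ℝ) * ((x.1 * haar q.1.1 q.2.1 x.1) * (x.2 * haar q.1.2 q.2.2 x.2))) (mu.prod mu) :=
  ((id_haar_int q.1.1 q.2.1).mul_prod (id_haar_int q.1.2 q.2.2)).const_mul _

lemma dd_ee_int (N : ℕ) (p : Fin N → ℝ × ℝ) (q : HIdx) :
    Integrable (fun x => dd N p x * ee q x) (mu.prod mu) := by
  simp_rw [dd_mul]
  exact (dd_sum_int N p q).sub (dd_id_int N q)

lemma dd_coef (N : ℕ) (p : Fin N → ℝ × ℝ) (hp : ∀ i, p i ∈ unitSq) (q : HIdx)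
    (h1 : q.2.1 < 2^q.1.1) (h2 : q.2.2 < 2^q.1.2) :
    ∫ x, dd N p x * ee q x ∂(mu.prod mu) =
      (∑ i : Fin N, TT q.1.1 q.2.1 (p i).1 * TT q.1.2 q.2.2 (p i).2)
        - N * (1/4^(q.1.1+1) * (1/4^(q.1.2+1))) := by
  simp_rw [dd_mul]
  rw [integral_sub (dd_sum_int N p q) (dd_id_int N q), integral_const_mul,
    integral_finsetSum _ fun i _ => (gs_haar_int _ _ _).mul_prod (gs_haar_int _ _ _)]
  congr 1
  · refine Finset.sum_congr rfl fun i _ => ?_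
    rw [integral_prod_mul (fun x => gs (p i).1 x * haar q.1.1 q.2.1 x)
      (fun x => gs (p i).2 x * haar q.1.2 q.2.2 x), haar_gs h1 (hp i).1.1, haar_gs h2 (hp i).2.1]
  · rw [integral_prod_mul (fun x => x * haar q.1.1 q.2.1 x)
      (fun x => x * haar q.1.2 q.2.2 x), haar_id h1, haar_id h2]

lemma dd_meas (N : ℕ) (p : Fin N → ℝ × ℝ) : Measurable (dd N p) := by
  unfold dd
  refine Measurable.sub (Finset.measurable_sum _ fun i _ => ?_) (by fun_prop)
  exact ((gs_meas _).comp measurable_fst).mul ((gs_meas _).comp measurable_snd)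

lemma dd_sq_int (N : ℕ) (p : Fin N → ℝ × ℝ) :
    Integrable (fun x => dd N p x ^ 2) (mu.prod mu) := by
  refine Integrable.of_bound ((dd_meas N p).pow_const 2).aestronglyMeasurable ((N + N)^2 : ℝ) ?_
  rw [← vol_unitSq]
  refine (ae_restrict_mem (measurableSet_Ico.prod measurableSet_Ico)).mono fun x hx => ?_
  rw [norm_pow, Real.norm_eq_abs]
  refine pow_le_pow_left₀ (abs_nonneg _) ?_ 2
  unfold dd
  refine (abs_sub _ _).trans (add_le_add ?_ ?_)
  · refine (Finset.abs_sum_le_sum_abs _ _).trans ?_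
    refine (Finset.sum_le_card_nsmul _ _ 1 fun i _ => ?_).trans (by simp)
    rw [abs_mul]
    exact mul_le_one₀ (gs_bound _ _) (abs_nonneg _) (gs_bound _ _)
  · obtain ⟨⟨a1, a2⟩, b1, b2⟩ := hx
    rw [abs_of_nonneg (by positivity)]
    exact mul_le_of_le_one_right (by positivity) (mul_le_one₀ a2.le b1 b2.le)

/-- Contribution of a level to the squared norm. -/
def EE (N : ℕ) (p : Fin N → ℝ × ℝ) (j : ℕ × ℕ) : ℝ :=
  ∑ l ∈ Finset.range (2^j.1) ×ˢ Finset.range (2^j.2), 2^(j.1+j.2) *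
    ((∑ i : Fin N, TT j.1 l.1 (p i).1 * TT j.2 l.2 (p i).2) - N * (1/4^(j.1+1) * (1/4^(j.2+1))))^2

lemma EE_nonneg (N : ℕ) (p : Fin N → ℝ × ℝ) (j : ℕ × ℕ) : 0 ≤ EE N p j :=
  Finset.sum_nonneg fun l _ => by positivity

lemma EE_bessel (N : ℕ) (p : Fin N → ℝ × ℝ) (hp : ∀ i, p i ∈ unitSq) (lv : Finset (ℕ × ℕ)) :
    ∑ j ∈ lv, EE N p j ≤ ∫ x in unitSq, disc N p x ^ 2 := by
  rw [disc_eq N p hp, vol_unitSq]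
  have hb : ∀ q ∈ boxes lv, q.2.1 < 2^q.1.1 ∧ q.2.2 < 2^q.1.2 := by
    intro q hq
    simpa [boxes] using (Finset.mem_sigma.1 hq).2
  have := bessel (mu.prod mu) (dd N p) ee (boxes lv) (fun q => 1/2^(q.1.1+q.1.2)) (fun q => by positivity)
    (dd_sq_int N p) (fun q _ => dd_ee_int N p q) ?_ ?_
  · refine le_trans (le_of_eq ?_) this
    rw [boxes, Finset.sum_sigma]
    refine Finset.sum_congr rfl fun j hj => ?_
    unfold EE
    refine Finset.sum_congr rfl fun l hl => ?_
    have hl' : l.1 < 2^j.1 ∧ l.2 < 2^j.2 := by simpa using hl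
    rw [dd_coef N p hp ⟨j, l⟩ hl'.1 hl'.2]
    rw [div_div_eq_mul_div, div_one, mul_comm]
  · intro q _ q' _
    simp_rw [ee_mul]
    exact (haar_mul_int _ _ _ _).mul_prod (haar_mul_int _ _ _ _)
  · intro q hq q' hq'
    simp_rw [ee_mul]
    rw [integral_prod_mul (fun x => haar q.1.1 q.2.1 x * haar q'.1.1 q'.2.1 x)
      (fun x => haar q.1.2 q.2.2 x * haar q'.1.2 q'.2.2 x),
      haar_orth (hb q hq).1 (hb q' hq').1, haar_orth (hb q hq).2 (hb q' hq').2]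
    obtain ⟨⟨i, k⟩, ⟨l, r⟩⟩ := q
    obtain ⟨⟨i', k'⟩, ⟨l', r'⟩⟩ := q'
    by_cases h : i = i' ∧ l = l'
    · by_cases h' : k = k' ∧ r = r'
      · obtain ⟨rfl, rfl⟩ := h
        obtain ⟨rfl, rfl⟩ := h'
        simp [pow_add, mul_comm]
      · rw [if_neg h', mul_zero, if_neg]
        intro hh; apply h'
        simp only [Sigma.mk.injEq, Prod.mk.injEq, heq_eq_eq] at hh
        tauto
    · rw [if_neg h, zero_mul, if_neg]
      intro hh; apply h
      simp only [Sigma.mk.injEq, Prod.mk.injEq, heq_eq_eq] at hh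
      tauto

lemma EE_lower (N : ℕ) (p : Fin N → ℝ × ℝ) (hp : ∀ i, p i ∈ unitSq) (i k : ℕ) :
    (N/2^(i+k))^2/256 + ∑ r : Fin N, ((tent (2^i*(p r).1) * tent (2^k*(p r).2))^2 / 2^(i+k)
      - N/(2^(i+k))^2 * (tent (2^i*(p r).1) * tent (2^k*(p r).2)) / 8) ≤ EE N p (i, k) := by
  unfold EE
  dsimp only
  set c : ℝ := N * (1/4^(i+1) * (1/4^(k+1))) with hc
  have hc' : c = N / (2^(i+k))^2 / 16 := by
    have : ∀ n : ℕ, (4:ℝ)^n = (2^n)^2 := fun n => by rw [← pow_mul, mul_comm, pow_mul]; norm_num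
    rw [hc, this (i+1), this (k+1), pow_add (2:ℝ) i 1, pow_add (2:ℝ) k 1, pow_add (2:ℝ) i k]
    field_simp; norm_num
  set X : ℕ × ℕ → Fin N → ℝ := fun l r => TT i l.1 (p r).1 * TT k l.2 (p r).2 with hX
  have hXn : ∀ l r, 0 ≤ X l r := fun l r => mul_nonneg (TT_nonneg _ _ _) (TT_nonneg _ _ _)
  have hXs : ∀ r, ∑ l ∈ Finset.range (2^i) ×ˢ Finset.range (2^k), X l r =
      tent (2^i*(p r).1) / 2^i * (tent (2^k*(p r).2) / 2^k) := by
    intro r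
    rw [Finset.sum_product, ← TT_sum i (hp r).1.1 (hp r).1.2, ← TT_sum k (hp r).2.1 (hp r).2.2,
      Finset.sum_mul_sum]
  have hXs2 : ∀ r, ∑ l ∈ Finset.range (2^i) ×ˢ Finset.range (2^k), X l r ^ 2 =
      (tent (2^i*(p r).1) / 2^i)^2 * (tent (2^k*(p r).2) / 2^k)^2 := by
    intro r
    rw [Finset.sum_product, ← TT_sum_sq i (hp r).1.1 (hp r).1.2, ← TT_sum_sq k (hp r).2.1 (hp r).2.2,
      Finset.sum_mul_sum]
    simp only [hX, mul_pow]
  have step : ∀ l ∈ Finset.range (2^i) ×ˢ Finset.range (2^k),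
      (2:ℝ)^(i+k) * (∑ r, (X l r ^ 2 - 2 * c * X l r) + c^2) ≤ 2^(i+k) * (∑ r, X l r - c)^2 := by
    intro l _
    refine mul_le_mul_of_nonneg_left ?_ (by positivity)
    rw [Finset.sum_sub_distrib, ← Finset.mul_sum]
    have : ∑ r, X l r ^ 2 ≤ (∑ r, X l r)^2 :=
      Finset.sum_sq_le_sq_sum_of_nonneg fun r _ => hXn l r
    nlinarith
  refine le_trans (le_of_eq ?_) (Finset.sum_le_sum step)
  rw [← Finset.mul_sum, Finset.sum_add_distrib, Finset.sum_comm]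
  simp_rw [Finset.sum_sub_distrib, ← Finset.mul_sum, hXs, hXs2]
  rw [Finset.sum_const, Finset.card_product, Finset.card_range, Finset.card_range, nsmul_eq_mul]
  push_cast
  rw [hc', mul_add, mul_sub, Finset.mul_sum, Finset.mul_sum, Finset.mul_sum, ← Finset.sum_sub_distrib,
    ← Finset.sum_sub_distrib, add_comm, pow_add]
  congr 1
  · refine Finset.sum_congr rfl fun r _ => ?_
    field_simp
    ring
  · field_simp
    norm_num

lemma bracket (N : ℕ) (hN : 0 < N) (p : Fin N → ℝ × ℝ) (hp : ∀ i, p i ∈ unitSq) (i k : ℕ)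
    (h1 : (3/4 : ℝ) ≤ N/2^(i+k)) (h2 : (N/2^(i+k) : ℝ) ≤ 3/2) :
    317/672/256 ≤ EE N p (i,k) + (EE N p (i+1,k) + EE N p (i,k+1))/2
      + (EE N p (i+2,k) + 2 * EE N p (i+1,k+1) + EE N p (i,k+2))/4 := by
  have e00 := EE_lower N p hp i k
  have e10 := EE_lower N p hp (i+1) k
  have e01 := EE_lower N p hp i (k+1)
  have e20 := EE_lower N p hp (i+2) k
  have e11 := EE_lower N p hp (i+1) (k+1)
  have e02 := EE_lower N p hp i (k+2)
  have hNr : (0:ℝ) < N := by exact_mod_cast hN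
  set M : ℝ := 2^(i+k) with hM
  have hMp : 0 < M := by positivity
  have g10 : (2:ℝ)^(i+1+k) = 2*M := by rw [hM, add_right_comm, pow_succ]; ring
  have g01 : (2:ℝ)^(i+(k+1)) = 2*M := by rw [hM, ← add_assoc, pow_succ]; ring
  have g20 : (2:ℝ)^(i+2+k) = 4*M := by rw [hM, add_right_comm, pow_add]; ring
  have g11 : (2:ℝ)^(i+1+(k+1)) = 4*M := by rw [hM, show i+1+(k+1) = i+k+2 by ring, pow_add]; ring
  have g02 : (2:ℝ)^(i+(k+2)) = 4*M := by rw [hM, ← add_assoc, pow_add]; ring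
  rw [g10] at e10
  rw [g01] at e01
  rw [g20] at e20
  rw [g11] at e11
  rw [g02] at e02
  have d1 : ∀ (n : ℕ) (x : ℝ), (2:ℝ)^(n+1)*x = 2*(2^n*x) := fun n x => by rw [pow_succ]; ring
  have d2 : ∀ (n : ℕ) (x : ℝ), (2:ℝ)^(n+2)*x = 2*(2*(2^n*x)) := fun n x => by rw [pow_add]; ring
  simp only [d1, d2] at e10 e01 e20 e11 e02
  set l : ℝ := N/M with hl
  have hlp : 0 < l := by positivity
  have main : ∀ r : Fin N, -((21/16*l^2 - 317/672)/256/N) ≤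
      ((tent (2^i*(p r).1) * tent (2^k*(p r).2))^2 / M
        - N/M^2 * (tent (2^i*(p r).1) * tent (2^k*(p r).2)) / 8)
      + (((tent (2*(2^i*(p r).1)) * tent (2^k*(p r).2))^2 / (2*M)
        - N/(2*M)^2 * (tent (2*(2^i*(p r).1)) * tent (2^k*(p r).2)) / 8)
        + ((tent (2^i*(p r).1) * tent (2*(2^k*(p r).2)))^2 / (2*M)
        - N/(2*M)^2 * (tent (2^i*(p r).1) * tent (2*(2^k*(p r).2))) / 8))/2
      + (((tent (2*(2*(2^i*(p r).1))) * tent (2^k*(p r).2))^2 / (4*M)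
        - N/(4*M)^2 * (tent (2*(2*(2^i*(p r).1))) * tent (2^k*(p r).2)) / 8)
        + 2 * ((tent (2*(2^i*(p r).1)) * tent (2*(2^k*(p r).2)))^2 / (4*M)
        - N/(4*M)^2 * (tent (2*(2^i*(p r).1)) * tent (2*(2^k*(p r).2))) / 8)
        + ((tent (2^i*(p r).1) * tent (2*(2*(2^k*(p r).2))))^2 / (4*M)
        - N/(4*M)^2 * (tent (2^i*(p r).1) * tent (2*(2*(2^k*(p r).2)))) / 8))/4 := by
    intro r
    have hk := key h1 h2 (tent_Dbl (2^i*(p r).1)) (tent_Dbl (2*(2^i*(p r).1))) (tent_le _)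
      (tent_Dbl (2^k*(p r).2)) (tent_Dbl (2*(2^k*(p r).2))) (tent_le _)
    generalize tent (2^i*(p r).1) = a at *
    generalize tent (2*(2^i*(p r).1)) = a1 at *
    generalize tent (2*(2*(2^i*(p r).1))) = a2 at *
    generalize tent (2^k*(p r).2) = b at *
    generalize tent (2*(2^k*(p r).2)) = b1 at *
    generalize tent (2*(2*(2^k*(p r).2))) = b2 at *
    have hk' : -((21/16*l^2 - 317/672)/256/N) ≤ -((l^2 * Lf a a1 a2 b b1 b2 - l * Qf a a1 a2 b b1 b2)/256/N) := by
      gcongr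
    refine hk'.trans (le_of_eq ?_)
    rw [hl]
    unfold Lf Qf
    field_simp
    ring
  have hsum := Finset.sum_le_sum fun r (_ : r ∈ (Finset.univ : Finset (Fin N))) => main r
  rw [Finset.sum_const, Finset.card_univ, Fintype.card_fin, nsmul_eq_mul] at hsum
  simp only [Finset.sum_add_distrib, ← Finset.sum_div, ← Finset.mul_sum] at hsum
  have hh : (N:ℝ) * -((21/16*l^2 - 317/672)/256/N) = -((21/16*l^2 - 317/672)/256) := by
    field_simp
  rw [hh] at hsum
  have q1 : (N:ℝ)/(2*M) = l/2 := by rw [hl]; field_simp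
  have q2 : (N:ℝ)/(4*M) = l/4 := by rw [hl]; field_simp
  rw [q1] at e10 e01
  rw [q2] at e20 e11 e02
  linarith

lemma levels (E : ℕ × ℕ → ℝ) (hE : ∀ j, 0 ≤ E j) (m : ℕ) :
    ∑ j ∈ Finset.HasAntidiagonal.antidiagonal m, (E (j.1,j.2) + (E (j.1+1,j.2) + E (j.1,j.2+1))/2
      + (E (j.1+2,j.2) + 2 * E (j.1+1,j.2+1) + E (j.1,j.2+2))/4) ≤
    ∑ j ∈ Finset.HasAntidiagonal.antidiagonal m ∪ Finset.HasAntidiagonal.antidiagonal (m+1) ∪ Finset.HasAntidiagonal.antidiagonal (m+2), E j := by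
  rw [Finset.sum_union, Finset.sum_union]
  · have a1 := Finset.Nat.sum_antidiagonal_succ (n := m) (f := E)
    have a2 := Finset.Nat.sum_antidiagonal_succ' (n := m) (f := E)
    have b1 := Finset.Nat.sum_antidiagonal_succ (n := m+1) (f := E)
    have b2 := Finset.Nat.sum_antidiagonal_succ' (n := m+1) (f := E)
    have c1 := Finset.Nat.sum_antidiagonal_succ (n := m) (f := fun j => E (j.1+1, j.2))
    have c2 := Finset.Nat.sum_antidiagonal_succ' (n := m) (f := fun j => E (j.1+1, j.2))
    have c3 := Finset.Nat.sum_antidiagonal_succ' (n := m) (f := fun j => E (j.1, j.2+1))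
    simp only [Finset.sum_add_distrib, ← Finset.sum_div, ← Finset.mul_sum]
    dsimp only at *
    simp only [add_assoc, Nat.reduceAdd, zero_add] at *
    linarith [hE (0, m+1), hE (m+1, 0), hE (0, m+2), hE (m+2, 0), hE (1, m+1), hE (m+1, 1)]
  · rw [Finset.disjoint_left]
    intro j h1 h2
    rw [Finset.HasAntidiagonal.mem_antidiagonal] at h1 h2
    omega
  · rw [Finset.disjoint_left]
    intro j h1 h2
    rw [Finset.mem_union, Finset.HasAntidiagonal.mem_antidiagonal, Finset.HasAntidiagonal.mem_antidiagonal] at h1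
    rw [Finset.HasAntidiagonal.mem_antidiagonal] at h2
    omega

lemma exists_level (N : ℕ) (hN : 2 ≤ N) : ∃ m : ℕ, (3/4 : ℝ) ≤ N/2^m ∧ (N/2^m : ℝ) ≤ 3/2 := by
  have h1 : (2:ℝ)^(Nat.log 2 N) ≤ N := by exact_mod_cast Nat.pow_log_le_self 2 (by omega)
  have h2 : (N:ℝ) < 2^(Nat.log 2 N + 1) := by
    exact_mod_cast Nat.lt_pow_succ_log_self (by norm_num) N
  have hp : (0:ℝ) < 2^(Nat.log 2 N) := by positivity
  rw [pow_succ] at h2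
  by_cases h : (N:ℝ) ≤ 3/2 * 2^(Nat.log 2 N)
  · refine ⟨Nat.log 2 N, ?_, ?_⟩
    · rw [le_div_iff₀ hp]; linarith
    · rw [div_le_iff₀ hp]; exact h
  · push Not at h
    refine ⟨Nat.log 2 N + 1, ?_, ?_⟩
    · rw [le_div_iff₀ (by positivity), pow_succ]; linarith
    · rw [div_le_iff₀ (by positivity), pow_succ]; linarith

/-- For every `N ≥ 2` and every `N`-point set `P ⊂ [0,1)²`,
`‖D_P | L₂‖ ≥ √(317/(172032·log 2)) · √(log N)  (= 0.0515599… · √(log N))`. -/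
theorem l2disc_lower_bound (N : ℕ) (hN : 2 ≤ N)
    (p : Fin N → ℝ × ℝ) (hp : ∀ i, p i ∈ unitSq) :
    Real.sqrt (317 / (172032 * Real.log 2)) * Real.sqrt (Real.log N) ≤ L2disc N p := by
  obtain ⟨m, h1, h2⟩ := exists_level N hN
  have hl2 : 0 < Real.log 2 := Real.log_pos (by norm_num)
  rw [← Real.sqrt_mul (by positivity), L2disc]
  apply Real.sqrt_le_sqrt
  refine le_trans ?_ ((levels (EE N p) (EE_nonneg N p) m).trans (EE_bessel N p hp _))
  have hb : ∑ j ∈ Finset.HasAntidiagonal.antidiagonal m, (317/672/256 : ℝ) ≤ _ := Finset.sum_le_sum fun j hj => by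
    have hj' := Finset.HasAntidiagonal.mem_antidiagonal.1 hj
    exact bracket N (by omega) p hp j.1 j.2 (by rw [hj']; exact h1) (by rw [hj']; exact h2)
  refine le_trans ?_ hb
  rw [Finset.sum_const, Finset.Nat.card_antidiagonal, nsmul_eq_mul]
  have hlog : Real.log N ≤ (m+1) * Real.log 2 := by
    have : (N:ℝ) ≤ 2^(m+1) := by
      rw [div_le_iff₀ (by positivity)] at h2
      have : (0:ℝ) < 2^m := by positivity
      rw [pow_succ]; linarith
    have h3 := Real.log_le_log (by positivity) this
    rw [Real.log_pow] at h3
    exact_mod_cast h3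
  calc 317 / (172032 * Real.log 2) * Real.log N
      ≤ 317 / (172032 * Real.log 2) * ((m+1) * Real.log 2) :=
        mul_le_mul_of_nonneg_left hlog (by positivity)
    _ = ((m+1 : ℕ) : ℝ) * (317/672/256) := by
        push_cast; field_simp; norm_num

end
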